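/- arXiv:2403.12575 — 10 statements merged into one kernel-verified Lean document; each statement's English description precedes it below -/
import Mathlib

section
/- Membership in the non-observable subspace is decided by words of length at most n². That is, for a matrix X, one has X ∈ N if and only if C(M_w X) = 0 for every word w over Ω of length at most n² (where n² = dim of the space of n×n matrices). -/
/-!
Let `N_k` be the subspace of matrices killed by `C ∘ M_w` for all words `w` of length at most `k`.
The `N_k` decrease, and `N_{k+1}` consists of the `X ∈ ker C` all of whose images `M_o X` lie in
`N_k` (`mem_nonObsUpTo_succ`), so once `N_j = N_{j+1}` the sequence is constant from `j` on
(`nonObsUpTo_stable`). As every strict inclusion lowers the dimension, and `dim N_0 ≤ n²`, such a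
`j` exists with `j ≤ n²` (`exists_nonObsUpTo_eq`); hence `N_{n²}` is the whole intersection `N`.
-/

open Matrix

/-- Composition of the conditional maps along a word `w = [k₀, …, k_t]`:
`Mword M w = M_{k_t} ∘ ⋯ ∘ M_{k₀}` (the empty word gives the identity). -/
def Mword {Ω V : Type*} [AddCommMonoid V] [Module ℂ V]
    (M : Ω → V →ₗ[ℂ] V) : List Ω → (V →ₗ[ℂ] V)
  | [] => LinearMap.id
  | k :: w => (Mword M w).comp (M k)

/-- The non-observable subspace `N = {X | C (M_w X) = 0 for every word w}`. -/
def NonObs {Ω : Type*} {n : ℕ} {Y : Type*} [AddCommGroup Y] [Module ℂ Y]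
    (M : Ω → Matrix (Fin n) (Fin n) ℂ →ₗ[ℂ] Matrix (Fin n) (Fin n) ℂ)
    (C : Matrix (Fin n) (Fin n) ℂ →ₗ[ℂ] Y) : Set (Matrix (Fin n) (Fin n) ℂ) :=
  {X | ∀ w : List Ω, C (Mword M w X) = 0}

/-- The subspace of vectors that no word of length at most `k` detects through the output `C`. -/
def nonObsUpTo {Ω V Y : Type*} [AddCommGroup V] [Module ℂ V] [AddCommGroup Y] [Module ℂ Y]
    (M : Ω → V →ₗ[ℂ] V) (C : V →ₗ[ℂ] Y) (k : ℕ) : Submodule ℂ V where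
  carrier := {X | ∀ w : List Ω, w.length ≤ k → C (Mword M w X) = 0}
  add_mem' := by
    intro a b ha hb w hw
    simp [ha w hw, hb w hw]
  zero_mem' := by
    intro w _
    simp
  smul_mem' := by
    intro c a ha w hw
    simp [ha w hw]

section UpTo

variable {Ω V Y : Type*} [AddCommGroup V] [Module ℂ V] [AddCommGroup Y] [Module ℂ Y]
  (M : Ω → V →ₗ[ℂ] V) (C : V →ₗ[ℂ] Y)

lemma nonObsUpTo_antitone : Antitone (nonObsUpTo M C) :=
  fun _ _ h _ hX w hw => hX w (hw.trans h)

lemma mem_nonObsUpTo_succ (k : ℕ) (X : V) :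
    X ∈ nonObsUpTo M C (k + 1) ↔ C X = 0 ∧ ∀ o, M o X ∈ nonObsUpTo M C k := by
  constructor
  · intro h
    exact ⟨h [] (by simp), fun o w hw => h (o :: w) (by simpa using hw)⟩
  · rintro ⟨h0, h⟩ w hw
    cases w with
    | nil => exact h0
    | cons o w => exact h o w (by simpa using hw)

lemma nonObsUpTo_stable {j : ℕ} (h : nonObsUpTo M C j = nonObsUpTo M C (j + 1)) (m : ℕ) :
    nonObsUpTo M C (j + m) = nonObsUpTo M C j := by
  induction m with
  | zero => rfl
  | succ m ih =>
    rw [h]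
    ext X
    rw [← add_assoc, mem_nonObsUpTo_succ, mem_nonObsUpTo_succ, ih]

lemma exists_nonObsUpTo_eq [FiniteDimensional ℂ V] :
    ∃ j ≤ Module.finrank ℂ V, nonObsUpTo M C j = nonObsUpTo M C (j + 1) := by
  by_contra! hne
  have key : ∀ k ≤ Module.finrank ℂ V + 1,
      Module.finrank ℂ (nonObsUpTo M C k) + k ≤ Module.finrank ℂ V := by
    intro k
    induction k with
    | zero => exact fun _ => Submodule.finrank_le _
    | succ k ih =>
      intro hk
      have hlt : nonObsUpTo M C (k + 1) < nonObsUpTo M C k :=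
        lt_of_le_of_ne (nonObsUpTo_antitone M C k.le_succ) (hne k (by omega)).symm
      have := Submodule.finrank_lt_finrank_of_lt hlt
      have := ih (by omega)
      omega
  have := key _ le_rfl
  omega

end UpTo

/-- Membership in the non-observable subspace is decided by words of length at most
`n² = dim (Matrix n n ℂ)`. -/
theorem mem_nonObs_iff_short_words {Ω : Type*} [Fintype Ω] {n : ℕ} (hn : 1 ≤ n)
    {Y : Type*} [AddCommGroup Y] [Module ℂ Y] [FiniteDimensional ℂ Y]
    (M : Ω → Matrix (Fin n) (Fin n) ℂ →ₗ[ℂ] Matrix (Fin n) (Fin n) ℂ)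
    (C : Matrix (Fin n) (Fin n) ℂ →ₗ[ℂ] Y)
    (X : Matrix (Fin n) (Fin n) ℂ) :
    X ∈ NonObs M C ↔ ∀ w : List Ω, w.length ≤ n ^ 2 → C (Mword M w X) = 0 := by
  refine ⟨fun h w _ => h w, fun h w => ?_⟩
  obtain ⟨j, hj, heq⟩ := exists_nonObsUpTo_eq M C
  have hdim : Module.finrank ℂ (Matrix (Fin n) (Fin n) ℂ) = n ^ 2 := by
    simp [Module.finrank_matrix, sq]
  rw [hdim] at hj
  have hX : X ∈ nonObsUpTo M C j := nonObsUpTo_antitone M C hj h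
  rw [← nonObsUpTo_stable M C heq w.length] at hX
  exact hX w (by omega)
end

section
/- Switching-system reduction by a projector: let Π be a linear map on the n×n complex matrices with Π ∘ Π = Π and ker Π ⊆ N (this holds in particular for the orthogonal projection onto any subspace V containing the Hilbert–Schmidt orthogonal complement of N). Then for every matrix ρ and every word w = [k_0, …, k_t] over Ω, C(M_w ρ) = C( Π ∘ M_{k_t} ∘ Π ∘ ⋯ ∘ Π ∘ M_{k_0} ∘ Π ) ρ, i.e. the output of the switching dynamics is unchanged when every factor M_k is sandwiched between copies of Π. -/
open Matrix

/-- Sandwiched composition along the word `w = [k₀, …, k_t]`: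
`SWord P M w = P ∘ M_{k_t} ∘ P ∘ ⋯ ∘ P ∘ M_{k₀} ∘ P` (the empty word gives `P`). -/
def SWord {Ω V : Type*} [AddCommMonoid V] [Module ℂ V]
    (P : V →ₗ[ℂ] V) (M : Ω → V →ₗ[ℂ] V) : List Ω → (V →ₗ[ℂ] V)
  | [] => P
  | k :: w => (SWord P M w).comp ((M k).comp P)

/-- Switching-system reduction by a projector `Π` with `Π ∘ Π = Π` and `ker Π ⊆ N`:
sandwiching every factor `M_k` between copies of `Π` does not change the output. -/
theorem switching_reduction {Ω : Type*} [Fintype Ω] {n : ℕ} (hn : 1 ≤ n)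
    {Y : Type*} [AddCommGroup Y] [Module ℂ Y] [FiniteDimensional ℂ Y]
    (M : Ω → Matrix (Fin n) (Fin n) ℂ →ₗ[ℂ] Matrix (Fin n) (Fin n) ℂ)
    (C : Matrix (Fin n) (Fin n) ℂ →ₗ[ℂ] Y)
    (P : Matrix (Fin n) (Fin n) ℂ →ₗ[ℂ] Matrix (Fin n) (Fin n) ℂ)
    (hP : P.comp P = P)
    (hker : ∀ X, P X = 0 → X ∈ NonObs M C) :
    ∀ (ρ : Matrix (Fin n) (Fin n) ℂ) (w : List Ω),
      C (Mword M w ρ) = C (SWord P M w ρ) := by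
  -- `X - P X` lies in `ker P ⊆ N`, so replacing `X` by `P X` changes no output of any word.
  have hproj : ∀ (w : List Ω) (X : Matrix (Fin n) (Fin n) ℂ),
      C (Mword M w X) = C (Mword M w (P X)) := by
    intro w X
    have hPP : P (P X) = P X := LinearMap.congr_fun hP X
    have h : C (Mword M w (X - P X)) = 0 := hker (X - P X) (by rw [map_sub, hPP, sub_self]) w
    rwa [map_sub, map_sub, sub_eq_zero] at h
  intro ρ w
  induction w generalizing ρ with
  | nil => exact hproj [] ρ
  | cons k w ih => exact (hproj (k :: w) ρ).trans (ih (M k (P ρ)))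
end

section
/- Exact linear model reduction: let W be a finite-dimensional complex vector space and let R : Matrix n n ℂ →ₗ[ℂ] W and J : W →ₗ[ℂ] Matrix n n ℂ be linear maps with R ∘ J = id_W and ker(J ∘ R) ⊆ N. Define the reduced dynamics A_k = R ∘ M_k ∘ J for each k ∈ Ω and the reduced output map Č = C ∘ J. Then for every matrix ρ and every word w = [k_0, …, k_t] over Ω, C(M_w ρ) = Č( A_{k_t} ∘ ⋯ ∘ A_{k_0} (R ρ) ), i.e. the reduced model driven by the same outcome sequence reproduces the output of the original conditional evolution from the reduced initial condition R ρ. -/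
open Matrix

/-- Exact linear model reduction: with `R ∘ J = id` and `ker (J ∘ R) ⊆ N`, the reduced model
with dynamics `A_k = R ∘ M_k ∘ J`, output `Č = C ∘ J` and initial condition `R ρ`
reproduces the output of the original conditional evolution along every outcome word. -/
theorem exact_linear_reduction {Ω : Type*} [Fintype Ω] {n : ℕ} (hn : 1 ≤ n)
    {Y : Type*} [AddCommGroup Y] [Module ℂ Y] [FiniteDimensional ℂ Y]
    {W : Type*} [AddCommGroup W] [Module ℂ W] [FiniteDimensional ℂ W]
    (M : Ω → Matrix (Fin n) (Fin n) ℂ →ₗ[ℂ] Matrix (Fin n) (Fin n) ℂ)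
    (C : Matrix (Fin n) (Fin n) ℂ →ₗ[ℂ] Y)
    (R : Matrix (Fin n) (Fin n) ℂ →ₗ[ℂ] W) (J : W →ₗ[ℂ] Matrix (Fin n) (Fin n) ℂ)
    (hRJ : R.comp J = LinearMap.id)
    (hker : ∀ X, J (R X) = 0 → X ∈ NonObs M C) :
    ∀ (ρ : Matrix (Fin n) (Fin n) ℂ) (w : List Ω),
      C (Mword M w ρ) =
        C (J (Mword (fun k => R.comp ((M k).comp J)) w (R ρ))) := by
  -- `X - J (R X)` lies in `ker (J ∘ R) ⊆ N`, so `X` and `J (R X)` have the same outputs.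
  have key : ∀ X w, C (Mword M w X) = C (Mword M w (J (R X))) := by
    intro X w
    have hR : R (J (R X)) = R X := LinearMap.congr_fun hRJ (R X)
    have h := hker (X - J (R X)) (by simp [hR]) w
    rwa [map_sub, map_sub, sub_eq_zero] at h
  intro ρ w
  induction w generalizing ρ with
  | nil => exact key ρ []
  | cons k w ih =>
    -- Project `ρ` before applying `M k`; the first reduced step is then `R (M k (J (R ρ)))`.
    rw [key ρ (k :: w)]
    exact ih (M k (J (R ρ)))
end

section
/- Observability (minimality) of the reduced model: let W be a finite-dimensional complex vector space and let R : Matrix n n ℂ →ₗ[ℂ] W, J : W →ₗ[ℂ] Matrix n n ℂ satisfy R ∘ J = id_W and ker(J ∘ R) = N (the projector J ∘ R has kernel exactly the non-observable subspace). Define A_k = R ∘ M_k ∘ J and Č = C ∘ J. Then the reduced conditional evolution is observable: the only x ∈ W with Č(A_{k_t} ∘ ⋯ ∘ A_{k_0} x) = 0 for every word [k_0, …, k_t] over Ω (including the empty word, i.e. Č x = 0) is x = 0. -/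
/-!
Since `R ∘ J = id`, the difference `X - J (R X)` is killed by `J ∘ R`, hence lies in the
non-observable subspace, so `X` and `J (R X)` give the same output along every word. Inductively,
the reduced model started at `x` and the full model started at `J x` have the same outputs
(`output_reduced_eq`). A state `x` with zero reduced outputs thus has `J x` non-observable,
i.e. `J x = J (R (J x)) = 0`, and applying `R` gives `R (J x) = 0`, that is `x = 0`.
-/

open Matrix

/-- The reduced model started at `x` reproduces the outputs of the full model started at `J x`,
provided that replacing a state `X` by `J (R X)` changes no output. -/
lemma output_reduced_eq {Ω V W Y : Type*} [AddCommGroup V] [Module ℂ V]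
    [AddCommGroup W] [Module ℂ W] [AddCommGroup Y] [Module ℂ Y]
    (M : Ω → V →ₗ[ℂ] V) (C : V →ₗ[ℂ] Y) (R : V →ₗ[ℂ] W) (J : W →ₗ[ℂ] V)
    (h : ∀ X (w : List Ω), C (Mword M w (J (R X))) = C (Mword M w X)) (w : List Ω) (x : W) :
    C (J (Mword (fun k => R.comp ((M k).comp J)) w x)) = C (Mword M w (J x)) := by
  induction w generalizing x with
  | nil => rfl
  | cons k w ih => exact (ih _).trans (h _ w)

/-- Observability (minimality) of the reduced model: if `R ∘ J = id` and the projector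
`J ∘ R` has kernel exactly `N`, then the reduced conditional evolution with dynamics
`A_k = R ∘ M_k ∘ J` and output `Č = C ∘ J` is observable. -/
theorem reduced_model_observable {Ω : Type*} [Fintype Ω] {n : ℕ} (hn : 1 ≤ n)
    {Y : Type*} [AddCommGroup Y] [Module ℂ Y] [FiniteDimensional ℂ Y]
    {W : Type*} [AddCommGroup W] [Module ℂ W] [FiniteDimensional ℂ W]
    (M : Ω → Matrix (Fin n) (Fin n) ℂ →ₗ[ℂ] Matrix (Fin n) (Fin n) ℂ)
    (C : Matrix (Fin n) (Fin n) ℂ →ₗ[ℂ] Y)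
    (R : Matrix (Fin n) (Fin n) ℂ →ₗ[ℂ] W) (J : W →ₗ[ℂ] Matrix (Fin n) (Fin n) ℂ)
    (hRJ : R.comp J = LinearMap.id)
    (hker : ∀ X, J (R X) = 0 ↔ X ∈ NonObs M C) :
    ∀ x : W,
      (∀ w : List Ω, C (J (Mword (fun k => R.comp ((M k).comp J)) w x)) = 0) →
      x = 0 := by
  intro x hx
  have hRJ' : ∀ y, R (J y) = y := fun y => LinearMap.congr_fun hRJ y
  have h : ∀ X (w : List Ω), C (Mword M w (J (R X))) = C (Mword M w X) := by
    intro X w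
    have hmem : J (R X) - X ∈ NonObs M C := by
      rw [← hker]
      simp [hRJ']
    have hw := hmem w
    rwa [map_sub, map_sub, sub_eq_zero] at hw
  have hJx : J x = 0 := by
    have hmem : J x ∈ NonObs M C := fun w => (output_reduced_eq M C R J h w x).symm.trans (hx w)
    rwa [← hker, hRJ'] at hmem
  rw [← hRJ' x, hJx, map_zero]
end

section
/- Reproduction of trajectory probabilities: let R : Matrix n n ℂ →ₗ[ℂ] W and J : W →ₗ[ℂ] Matrix n n ℂ satisfy R ∘ J = id_W and ker(J ∘ R) ⊆ N_tr, where N_tr = {X : trace(M_w X) = 0 for every word w over Ω}. Define A_k = R ∘ M_k ∘ J. Then for every matrix ρ and every word w = [k_0, …, k_t] over Ω, trace(M_w ρ) = trace( J (A_{k_t} ∘ ⋯ ∘ A_{k_0} (R ρ)) ); in particular the reduced model reproduces the joint probability trace of every outcome trajectory. -/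
/-!
Since `R ∘ J = id`, the difference `X - J (R X)` lies in `ker (J ∘ R)`, hence is non-observable:
replacing `X` by `J (R X)` changes no trajectory trace. Making this replacement before each
letter of the word, by induction on the word, turns the dynamics `M_k` into `R ∘ M_k ∘ J`.
-/

open Matrix

/-- The non-observable subspace for the trace output alone:
`N_tr = {X | trace (M_w X) = 0 for every word w}`. -/
def NonObsTr {Ω : Type*} {n : ℕ}
    (M : Ω → Matrix (Fin n) (Fin n) ℂ →ₗ[ℂ] Matrix (Fin n) (Fin n) ℂ) :
    Set (Matrix (Fin n) (Fin n) ℂ) :=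
  {X | ∀ w : List Ω, Matrix.trace (Mword M w X) = 0}

/-- Reproduction of trajectory probabilities: if `R ∘ J = id` and `ker (J ∘ R) ⊆ N_tr`,
the reduced model with dynamics `A_k = R ∘ M_k ∘ J` reproduces the joint probability
trace of every outcome trajectory. -/
theorem reduced_model_trajectory_probabilities {Ω : Type*} [Fintype Ω] {n : ℕ} (hn : 1 ≤ n)
    {W : Type*} [AddCommGroup W] [Module ℂ W] [FiniteDimensional ℂ W]
    (M : Ω → Matrix (Fin n) (Fin n) ℂ →ₗ[ℂ] Matrix (Fin n) (Fin n) ℂ)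
    (R : Matrix (Fin n) (Fin n) ℂ →ₗ[ℂ] W) (J : W →ₗ[ℂ] Matrix (Fin n) (Fin n) ℂ)
    (hRJ : R.comp J = LinearMap.id)
    (hker : ∀ X, J (R X) = 0 → X ∈ NonObsTr M) :
    ∀ (ρ : Matrix (Fin n) (Fin n) ℂ) (w : List Ω),
      Matrix.trace (Mword M w ρ) =
        Matrix.trace (J (Mword (fun k => R.comp ((M k).comp J)) w (R ρ))) := by
  have key : ∀ (X : Matrix (Fin n) (Fin n) ℂ) (w : List Ω),
      Matrix.trace (Mword M w X) = Matrix.trace (Mword M w (J (R X))) := by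
    intro X w
    have hR : R (J (R X)) = R X := LinearMap.congr_fun hRJ (R X)
    have h := hker (X - J (R X)) (by rw [map_sub, hR, sub_self, map_zero]) w
    rwa [map_sub, Matrix.trace_sub, sub_eq_zero] at h
  intro ρ w
  induction w generalizing ρ with
  | nil => exact key ρ []
  | cons k w ih => exact (key ρ (k :: w)).trans (ih (M k (J (R ρ))))
end

section
/- Key identity for separability under Assumption (A2): suppose each conditional map factors as M_k = E ∘ K_k where E and K_k are linear maps on the n×n complex matrices, and suppose N (the non-observable subspace of the CE with maps M_k and output C) is E-invariant. Let Π and 𝔼 be idempotent linear endomorphisms of the n×n matrices with ker Π = N, Π ∘ 𝔼 = Π and 𝔼 ∘ Π = Π. Then for every k ∈ Ω, Π ∘ 𝔼 ∘ E ∘ K_k ∘ 𝔼 = Π ∘ 𝔼 ∘ E ∘ 𝔼 ∘ K_k ∘ 𝔼. -/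
open Matrix

/-- Key identity for separability under Assumption (A2): if `M_k = E ∘ K_k`, the
non-observable subspace `N` is `E`-invariant, and `Π`, `𝔼` are idempotents with
`ker Π = N`, `Π ∘ 𝔼 = Π`, `𝔼 ∘ Π = Π`, then
`Π ∘ 𝔼 ∘ E ∘ K_k ∘ 𝔼 = Π ∘ 𝔼 ∘ E ∘ 𝔼 ∘ K_k ∘ 𝔼` for every `k`. -/
theorem separability_key_identity_A2 {Ω : Type*} [Fintype Ω] {n : ℕ} (hn : 1 ≤ n)
    {Y : Type*} [AddCommGroup Y] [Module ℂ Y] [FiniteDimensional ℂ Y]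
    (M K : Ω → Matrix (Fin n) (Fin n) ℂ →ₗ[ℂ] Matrix (Fin n) (Fin n) ℂ)
    (E : Matrix (Fin n) (Fin n) ℂ →ₗ[ℂ] Matrix (Fin n) (Fin n) ℂ)
    (C : Matrix (Fin n) (Fin n) ℂ →ₗ[ℂ] Y)
    (hfac : ∀ k, M k = E.comp (K k))
    (hEinv : ∀ X ∈ NonObs M C, E X ∈ NonObs M C)
    (P Ee : Matrix (Fin n) (Fin n) ℂ →ₗ[ℂ] Matrix (Fin n) (Fin n) ℂ)
    (hPP : P.comp P = P) (hEeEe : Ee.comp Ee = Ee)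
    (hkerP : ∀ X, P X = 0 ↔ X ∈ NonObs M C)
    (hPEe : P.comp Ee = P) (hEeP : Ee.comp P = P) :
    ∀ k : Ω,
      P.comp (Ee.comp (E.comp ((K k).comp Ee))) =
        P.comp (Ee.comp (E.comp (Ee.comp ((K k).comp Ee)))) := by
  intro k
  have hPEe' : ∀ X, P (Ee X) = P X := fun X => LinearMap.congr_fun hPEe X
  -- `Z - 𝔼 Z` lies in `ker Π = N`, hence so does its image under `E`.
  have key : ∀ Z, P (E Z) = P (E (Ee Z)) := by
    intro Z
    have hZ : Z - Ee Z ∈ NonObs M C := by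
      rw [← hkerP, map_sub, hPEe', sub_self]
    have hEZ := (hkerP _).2 (hEinv _ hZ)
    rwa [map_sub, map_sub, sub_eq_zero] at hEZ
  ext1 X
  simp only [LinearMap.comp_apply, hPEe']
  exact key _
end

section
/- Separated exact reduction under Assumption (A3): suppose each conditional map factors as M_k = E ∘ K_k with E and K_k linear maps on the n×n complex matrices. Let W be a finite-dimensional complex vector space and R : Matrix n n ℂ →ₗ[ℂ] W, J : W →ₗ[ℂ] Matrix n n ℂ with R ∘ J = id_W, set 𝔼 = J ∘ R, and assume ker 𝔼 ⊆ N and that the range of 𝔼 is K_k-invariant for every k ∈ Ω (K_k(𝔼 X) belongs to the range of 𝔼 for all X). Define Ǩ_k = R ∘ K_k ∘ J, Ě = R ∘ E ∘ J, and Č = C ∘ J. Then for every matrix ρ and every word w = [k_0, …, k_t] over Ω, C(M_w ρ) = Č( (Ě ∘ Ǩ_{k_t}) ∘ ⋯ ∘ (Ě ∘ Ǩ_{k_0}) (R ρ) ); i.e. the reduced model with dynamics and conditioning reduced separately reproduces the conditioned output. -/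
/-!
Since `R ∘ J = id`, the map `𝔼 = J ∘ R` is idempotent, so `X - 𝔼 X ∈ ker 𝔼 ⊆ N` and replacing `X`
by `𝔼 X` changes no conditioned output. Along a word, each state may thus be projected by `𝔼` before
the next conditioning `K k`; invariance of the range makes the extra `𝔼` between `E` and `K k`, which
appears when the two are reduced separately, act trivially. Induction on the word concludes.
-/

open Matrix

/-- Separated exact reduction under Assumption (A3): if `M_k = E ∘ K_k`, `R ∘ J = id`,
`ker (J ∘ R) ⊆ N` and the range of `𝔼 = J ∘ R` is `K_k`-invariant for every `k`, then the
reduced model with separately reduced dynamics `Ě = R ∘ E ∘ J` and conditioning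
`Ǩ_k = R ∘ K_k ∘ J` reproduces the conditioned output. -/
theorem separated_reduction_A3 {Ω : Type*} [Fintype Ω] {n : ℕ} (hn : 1 ≤ n)
    {Y : Type*} [AddCommGroup Y] [Module ℂ Y] [FiniteDimensional ℂ Y]
    {W : Type*} [AddCommGroup W] [Module ℂ W] [FiniteDimensional ℂ W]
    (M K : Ω → Matrix (Fin n) (Fin n) ℂ →ₗ[ℂ] Matrix (Fin n) (Fin n) ℂ)
    (E : Matrix (Fin n) (Fin n) ℂ →ₗ[ℂ] Matrix (Fin n) (Fin n) ℂ)
    (C : Matrix (Fin n) (Fin n) ℂ →ₗ[ℂ] Y)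
    (hfac : ∀ k, M k = E.comp (K k))
    (R : Matrix (Fin n) (Fin n) ℂ →ₗ[ℂ] W) (J : W →ₗ[ℂ] Matrix (Fin n) (Fin n) ℂ)
    (hRJ : R.comp J = LinearMap.id)
    (hker : ∀ X, J (R X) = 0 → X ∈ NonObs M C)
    (hinv : ∀ (k : Ω) (X : Matrix (Fin n) (Fin n) ℂ),
      K k (J (R X)) ∈ LinearMap.range (J.comp R)) :
    ∀ (ρ : Matrix (Fin n) (Fin n) ℂ) (w : List Ω),
      C (Mword M w ρ) =
        C (J (Mword
          (fun k => (R.comp (E.comp J)).comp (R.comp ((K k).comp J))) w (R ρ))) := by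
  have hRJ' : ∀ x, R (J x) = x := fun x => LinearMap.congr_fun hRJ x
  -- `X - 𝔼 X` lies in `ker 𝔼`, so `X` and `𝔼 X` have the same conditioned outputs.
  have hobs : ∀ (w : List Ω) X, C (Mword M w X) = C (Mword M w (J (R X))) := by
    intro w X
    have h := hker (X - J (R X)) (by simp [hRJ']) w
    rw [map_sub, map_sub] at h
    exact sub_eq_zero.mp h
  -- `𝔼` fixes its range, so by invariance it may be inserted between `E` and `K k`.
  have hfix : ∀ k X, J (R (K k (J (R X)))) = K k (J (R X)) := by
    intro k X
    obtain ⟨Z, hZ⟩ := hinv k X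
    rw [← hZ]
    simp [hRJ']
  intro ρ w
  induction w generalizing ρ with
  | nil => exact hobs [] ρ
  | cons k w ih =>
    rw [hobs]
    simp only [Mword, LinearMap.comp_apply, hfac, hfix]
    simpa only [hfac] using ih (E (K k (J (R ρ))))
end

section
/- Separated exact reduction under Assumption (A4): suppose each conditional map factors as M_k = E ∘ K_k with E and K_k linear maps on the n×n complex matrices. Let R : Matrix n n ℂ →ₗ[ℂ] W and J : W →ₗ[ℂ] Matrix n n ℂ with R ∘ J = id_W, set 𝔼 = J ∘ R, and assume: ker 𝔼 ⊆ N; 𝔼 is self-adjoint for the Hilbert–Schmidt inner product (trace((𝔼 A)ᴴ B) = trace(Aᴴ (𝔼 B)) for all A, B); and the Hilbert–Schmidt adjoint E⁺ of E (characterized by trace((E⁺ A)ᴴ B) = trace(Aᴴ (E B)) for all A, B) maps the range of 𝔼 into itself. Define Ǩ_k = R ∘ K_k ∘ J, Ě = R ∘ E ∘ J, and Č = C ∘ J. Then for every matrix ρ and every word w = [k_0, …, k_t] over Ω, C(M_w ρ) = Č( (Ě ∘ Ǩ_{k_t}) ∘ ⋯ ∘ (Ě ∘ Ǩ_{k_0})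 (R ρ) ). -/
/-!
Write `P = J ∘ R`, an idempotent which is self-adjoint for the Hilbert–Schmidt inner product.
Invariance of the range of `P` under `E⁺` reads `P E⁺ P = E⁺ P`; taking adjoints gives
`P E P = P E`, and composing with `R` gives `R E P = R E` (`reduce_evolution`). Hence an extra
`P` may be inserted between `E` and `K_k`, so that separate reduction of `E` and `K_k` agrees
with the joint reduction `R M_k J`. The joint reduction is exact since `ker P` lies in the
non-observable subspace: `X` and `P X` always yield the same outputs. Induction on the word
combines the two facts.
-/

open Matrix

/-- Adjoint form of the invariance of `range (J ∘ R)` under `E⁺`: after `R`, the map `E` only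
depends on the projection `J (R X)` of its argument. -/
lemma reduce_evolution {n : ℕ} {W : Type*} [AddCommGroup W] [Module ℂ W]
    (E Eadj : Matrix (Fin n) (Fin n) ℂ →ₗ[ℂ] Matrix (Fin n) (Fin n) ℂ)
    (R : Matrix (Fin n) (Fin n) ℂ →ₗ[ℂ] W) (J : W →ₗ[ℂ] Matrix (Fin n) (Fin n) ℂ)
    (hRJ : ∀ x, R (J x) = x)
    (hsa : ∀ A B : Matrix (Fin n) (Fin n) ℂ,
      Matrix.trace ((J (R A))ᴴ * B) = Matrix.trace (Aᴴ * J (R B)))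
    (hadj : ∀ A B : Matrix (Fin n) (Fin n) ℂ,
      Matrix.trace ((Eadj A)ᴴ * B) = Matrix.trace (Aᴴ * E B))
    (hrange : ∀ X : Matrix (Fin n) (Fin n) ℂ,
      J (R X) = X → J (R (Eadj X)) = Eadj X)
    (X : Matrix (Fin n) (Fin n) ℂ) : R (E (J (R X))) = R (E X) := by
  have key : J (R (E (J (R X)))) = J (R (E X)) := by
    refine Matrix.ext_iff_trace_mul_left.mpr fun B => ?_
    obtain ⟨A, rfl⟩ : ∃ A : Matrix (Fin n) (Fin n) ℂ, Aᴴ = B := ⟨Bᴴ, by simp⟩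
    rw [← hsa, ← hsa, ← hadj, ← hadj, ← hsa, hrange _ (by rw [hRJ])]
  simpa only [hRJ] using congrArg R key

/-- Separated exact reduction under Assumption (A4): if `M_k = E ∘ K_k`, `R ∘ J = id`,
`ker (J ∘ R) ⊆ N`, `𝔼 = J ∘ R` is self-adjoint for the Hilbert–Schmidt inner product,
and the Hilbert–Schmidt adjoint `E⁺` of `E` maps the range of `𝔼` into itself, then the
reduced model with separately reduced dynamics `Ě = R ∘ E ∘ J` and conditioning
`Ǩ_k = R ∘ K_k ∘ J` reproduces the conditioned output. -/
theorem separated_reduction_A4 {Ω : Type*} [Fintype Ω] {n : ℕ} (hn : 1 ≤ n)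
    {Y : Type*} [AddCommGroup Y] [Module ℂ Y] [FiniteDimensional ℂ Y]
    {W : Type*} [AddCommGroup W] [Module ℂ W] [FiniteDimensional ℂ W]
    (M K : Ω → Matrix (Fin n) (Fin n) ℂ →ₗ[ℂ] Matrix (Fin n) (Fin n) ℂ)
    (E : Matrix (Fin n) (Fin n) ℂ →ₗ[ℂ] Matrix (Fin n) (Fin n) ℂ)
    (C : Matrix (Fin n) (Fin n) ℂ →ₗ[ℂ] Y)
    (hfac : ∀ k, M k = E.comp (K k))
    (R : Matrix (Fin n) (Fin n) ℂ →ₗ[ℂ] W) (J : W →ₗ[ℂ] Matrix (Fin n) (Fin n) ℂ)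
    (hRJ : R.comp J = LinearMap.id)
    (hker : ∀ X, J (R X) = 0 → X ∈ NonObs M C)
    (hsa : ∀ A B : Matrix (Fin n) (Fin n) ℂ,
      Matrix.trace ((J (R A))ᴴ * B) = Matrix.trace (Aᴴ * J (R B)))
    (Eadj : Matrix (Fin n) (Fin n) ℂ →ₗ[ℂ] Matrix (Fin n) (Fin n) ℂ)
    (hadj : ∀ A B : Matrix (Fin n) (Fin n) ℂ,
      Matrix.trace ((Eadj A)ᴴ * B) = Matrix.trace (Aᴴ * E B))
    (hrange : ∀ X : Matrix (Fin n) (Fin n) ℂ,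
      J (R X) = X → J (R (Eadj X)) = Eadj X) :
    ∀ (ρ : Matrix (Fin n) (Fin n) ℂ) (w : List Ω),
      C (Mword M w ρ) =
        C (J (Mword
          (fun k => (R.comp (E.comp J)).comp (R.comp ((K k).comp J))) w (R ρ))) := by
  have hRJ' : ∀ x, R (J x) = x := fun x => LinearMap.congr_fun hRJ x
  have hE := reduce_evolution E Eadj R J hRJ' hsa hadj hrange
  have hproj : ∀ X w, C (Mword M w X) = C (Mword M w (J (R X))) := fun X w => by
    have h := hker (X - J (R X)) (by simp [hRJ']) w
    rwa [map_sub, map_sub, sub_eq_zero] at h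
  intro ρ w
  induction w generalizing ρ with
  | nil => exact hproj ρ []
  | cons k w ih =>
    rw [hproj]
    simp only [Mword, LinearMap.comp_apply, hfac] at ih ⊢
    rw [ih, hE]
end

section
/- Separated exact reduction under Assumption (A2): suppose each conditional map factors as M_k = E ∘ K_k with E and K_k linear maps on the n×n complex matrices, and suppose the non-observable subspace N (of the CE with maps M_k and output C) is E-invariant. Let R : Matrix n n ℂ →ₗ[ℂ] W and J : W →ₗ[ℂ] Matrix n n ℂ with R ∘ J = id_W and ker(J ∘ R) ⊆ N. Define Ǩ_k = R ∘ K_k ∘ J, Ě = R ∘ E ∘ J, and Č = C ∘ J. Then for every matrix ρ and every word w = [k_0, …, k_t] over Ω, C(M_w ρ) = Č( (Ě ∘ Ǩ_{k_t}) ∘ ⋯ ∘ (Ě ∘ Ǩ_{k_0}) (R ρ) ). -/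
/-!
Since `R ∘ J = id`, the map `J ∘ R` is a projection whose complement `id - J ∘ R` takes values in
`ker (J ∘ R) ⊆ N`. Along a word, the full and the reduced models differ only by insertions of
`J ∘ R` before each `K k`, before each `E` and before `C`. An insertion before `K k` or `C` is
harmless because perturbations in `N` do not affect outputs along any word; one before `E` is harmless because `N`
is moreover `E`-invariant. Induction on the word, for all initial matrices at once, combines these.
-/

open Matrix

/-- Separated exact reduction under Assumption (A2): if `M_k = E ∘ K_k`, the
non-observable subspace `N` is `E`-invariant, `R ∘ J = id` and `ker (J ∘ R) ⊆ N`,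
then the reduced model with separately reduced dynamics `Ě = R ∘ E ∘ J` and
conditioning `Ǩ_k = R ∘ K_k ∘ J` reproduces the conditioned output. -/
theorem separated_reduction_A2 {Ω : Type*} [Fintype Ω] {n : ℕ} (hn : 1 ≤ n)
    {Y : Type*} [AddCommGroup Y] [Module ℂ Y] [FiniteDimensional ℂ Y]
    {W : Type*} [AddCommGroup W] [Module ℂ W] [FiniteDimensional ℂ W]
    (M K : Ω → Matrix (Fin n) (Fin n) ℂ →ₗ[ℂ] Matrix (Fin n) (Fin n) ℂ)
    (E : Matrix (Fin n) (Fin n) ℂ →ₗ[ℂ] Matrix (Fin n) (Fin n) ℂ)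
    (C : Matrix (Fin n) (Fin n) ℂ →ₗ[ℂ] Y)
    (hfac : ∀ k, M k = E.comp (K k))
    (hEinv : ∀ X ∈ NonObs M C, E X ∈ NonObs M C)
    (R : Matrix (Fin n) (Fin n) ℂ →ₗ[ℂ] W) (J : W →ₗ[ℂ] Matrix (Fin n) (Fin n) ℂ)
    (hRJ : R.comp J = LinearMap.id)
    (hker : ∀ X, J (R X) = 0 → X ∈ NonObs M C) :
    ∀ (ρ : Matrix (Fin n) (Fin n) ℂ) (w : List Ω),
      C (Mword M w ρ) =
        C (J (Mword
          (fun k => (R.comp (E.comp J)).comp (R.comp ((K k).comp J))) w (R ρ))) := by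
  -- Each `X` differs from `J (R X)` by an element of `ker (J ∘ R)`, since `R ∘ J = id`.
  have hproj : ∀ X, X - J (R X) ∈ NonObs M C := by
    intro X
    apply hker
    have h : R (J (R X)) = R X := LinearMap.congr_fun hRJ (R X)
    rw [map_sub, h, sub_self, map_zero]
  intro ρ w
  induction w generalizing ρ with
  | nil =>
    have h := hproj ρ []
    simpa [Mword, sub_eq_zero] using h
  | cons k w ih =>
    -- Inserting `J ∘ R` before `K k` is invisible to the output along the word `k :: w`.
    have h₁ := hproj ρ (k :: w)
    -- Inserting it between `K k` and `E` is invisible because `N` is `E`-invariant.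
    have h₂ := hEinv _ (hproj (K k (J (R ρ)))) w
    simp only [Mword, LinearMap.comp_apply, hfac k, map_sub, sub_eq_zero] at h₁ h₂ ⊢
    rw [h₁, h₂]
    exact ih (E (J (R (K k (J (R ρ))))))
end

section
/- Separated exact reduction under Assumption (A1): suppose each conditional map factors as M_k = E ∘ K_k with E and K_k linear maps on the n×n complex matrices, and suppose there exist scalars λ_k ∈ ℂ with E = Σ_{k∈Ω} λ_k M_k. Let R : Matrix n n ℂ →ₗ[ℂ] W and J : W →ₗ[ℂ] Matrix n n ℂ with R ∘ J = id_W and ker(J ∘ R) ⊆ N. Define Ǩ_k = R ∘ K_k ∘ J, Ě = R ∘ E ∘ J, and Č = C ∘ J. Then for every matrix ρ and every word w = [k_0, …, k_t] over Ω, C(M_w ρ) = Č( (Ě ∘ Ǩ_{k_t}) ∘ ⋯ ∘ (Ě ∘ Ǩ_{k_0}) (R ρ) ). -/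
/-!
The non-observable subspace `N` is invariant under every `M k`, hence under `E`, a linear
combination of the `M k`. Since `R ∘ J = id`, every `X - J (R X)` lies in `ker (J ∘ R) ⊆ N`.
Thus inserting the projection `J ∘ R` before or after `E` only changes the state by an element
of `N`, so full and reduced states stay congruent modulo `N` along any word, and `C` vanishes
on `N`.
-/

open Matrix

/-- `NonObs` is invariant under each conditional map: prepend the letter to the test word. -/
theorem NonObs.map_mem {Ω : Type*} {n : ℕ} {Y : Type*} [AddCommGroup Y] [Module ℂ Y]
    {M : Ω → Matrix (Fin n) (Fin n) ℂ →ₗ[ℂ] Matrix (Fin n) (Fin n) ℂ}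
    {C : Matrix (Fin n) (Fin n) ℂ →ₗ[ℂ] Y} {X : Matrix (Fin n) (Fin n) ℂ}
    (hX : X ∈ NonObs M C) (k : Ω) : M k X ∈ NonObs M C :=
  fun w => hX (k :: w)

theorem NonObs.add_mem {Ω : Type*} {n : ℕ} {Y : Type*} [AddCommGroup Y] [Module ℂ Y]
    {M : Ω → Matrix (Fin n) (Fin n) ℂ →ₗ[ℂ] Matrix (Fin n) (Fin n) ℂ}
    {C : Matrix (Fin n) (Fin n) ℂ →ₗ[ℂ] Y} {X Z : Matrix (Fin n) (Fin n) ℂ}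
    (hX : X ∈ NonObs M C) (hZ : Z ∈ NonObs M C) : X + Z ∈ NonObs M C :=
  fun w => by rw [map_add, map_add, hX w, hZ w, add_zero]

theorem NonObs.sum_smul_mem {Ω : Type*} [Fintype Ω] {n : ℕ}
    {Y : Type*} [AddCommGroup Y] [Module ℂ Y]
    {M : Ω → Matrix (Fin n) (Fin n) ℂ →ₗ[ℂ] Matrix (Fin n) (Fin n) ℂ}
    {C : Matrix (Fin n) (Fin n) ℂ →ₗ[ℂ] Y} {X : Matrix (Fin n) (Fin n) ℂ}
    (hX : X ∈ NonObs M C) (lam : Ω → ℂ) :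
    (∑ k : Ω, lam k • M k) X ∈ NonObs M C := by
  intro w
  have h : ∀ k, C (Mword M w (M k X)) = 0 := fun k => NonObs.map_mem hX k w
  simp [LinearMap.sum_apply, map_sum, h]

/-- Separated exact reduction under Assumption (A1): if `M_k = E ∘ K_k`, there are
scalars `λ_k` with `E = Σ_k λ_k M_k`, `R ∘ J = id` and `ker (J ∘ R) ⊆ N`, then the
reduced model with separately reduced dynamics `Ě = R ∘ E ∘ J` and conditioning
`Ǩ_k = R ∘ K_k ∘ J` reproduces the conditioned output. -/
theorem separated_reduction_A1 {Ω : Type*} [Fintype Ω] {n : ℕ} (hn : 1 ≤ n)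
    {Y : Type*} [AddCommGroup Y] [Module ℂ Y] [FiniteDimensional ℂ Y]
    {W : Type*} [AddCommGroup W] [Module ℂ W] [FiniteDimensional ℂ W]
    (M K : Ω → Matrix (Fin n) (Fin n) ℂ →ₗ[ℂ] Matrix (Fin n) (Fin n) ℂ)
    (E : Matrix (Fin n) (Fin n) ℂ →ₗ[ℂ] Matrix (Fin n) (Fin n) ℂ)
    (C : Matrix (Fin n) (Fin n) ℂ →ₗ[ℂ] Y)
    (hfac : ∀ k, M k = E.comp (K k))
    (lam : Ω → ℂ) (hE : E = ∑ k : Ω, lam k • M k)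
    (R : Matrix (Fin n) (Fin n) ℂ →ₗ[ℂ] W) (J : W →ₗ[ℂ] Matrix (Fin n) (Fin n) ℂ)
    (hRJ : R.comp J = LinearMap.id)
    (hker : ∀ X, J (R X) = 0 → X ∈ NonObs M C) :
    ∀ (ρ : Matrix (Fin n) (Fin n) ℂ) (w : List Ω),
      C (Mword M w ρ) =
        C (J (Mword
          (fun k => (R.comp (E.comp J)).comp (R.comp ((K k).comp J))) w (R ρ))) := by
  have hproj : ∀ X, X - J (R X) ∈ NonObs M C := by
    intro X
    apply hker
    have h : R (J (R X)) = R X := LinearMap.congr_fun hRJ (R X)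
    rw [map_sub, h, sub_self, map_zero]
  have hEN : ∀ X, X ∈ NonObs M C → E X ∈ NonObs M C := by
    intro X hX
    rw [hE]
    exact NonObs.sum_smul_mem hX lam
  -- After a step the reduced state need not be the `R`-image of the full one, so the induction
  -- carries only their congruence modulo `N`.
  have key : ∀ (w : List Ω) (ρ : Matrix (Fin n) (Fin n) ℂ) (v : W),
      ρ - J v ∈ NonObs M C →
      C (Mword M w ρ) =
        C (J (Mword
          (fun k => (R.comp (E.comp J)).comp (R.comp ((K k).comp J))) w v)) := by
    intro w
    induction w with
    | nil =>
      intro ρ v h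
      have h0 : C (ρ - J v) = 0 := h []
      rw [map_sub] at h0
      exact sub_eq_zero.mp h0
    | cons k w ih =>
      intro ρ v h
      refine ih (M k ρ) (R (E (J (R (K k (J v)))))) ?_
      have hM : ∀ X, M k X = E (K k X) := fun X => by rw [hfac k]; rfl
      -- Telescope: the initial discrepancy, then the two inserted projections.
      have hsplit : M k ρ - J (R (E (J (R (K k (J v)))))) =
          M k (ρ - J v) + E (K k (J v) - J (R (K k (J v)))) +
            (E (J (R (K k (J v)))) - J (R (E (J (R (K k (J v))))))) := by
        rw [map_sub (M k), map_sub E, hM (J v)]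
        abel
      rw [hsplit]
      exact NonObs.add_mem (NonObs.add_mem (NonObs.map_mem h k) (hEN _ (hproj _))) (hproj _)
  exact fun ρ w => key w ρ (R ρ) (hproj ρ)
end
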